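/- Let G_p be the full uncapacitated reduction graph, which for each assignment β to U_2 contains a copy of the gadget G_p^{α,β,γ}, where distinct copies share only the source α and sink γ and have no edges between them. Then for every pair (α, γ): the maximum α-γ flow in G_p is at most 2^{|U_2|}·m − 1 if some β makes (α, β, γ) satisfy at least p clauses, and is at least 2^{|U_2|}·m if for every β the triple (α, β, γ) satisfies at most p − 1 clauses. -/

import Mathlib

attribute [local instance] Classical.propDecidable

/-- A feasible `s`-`t` flow in a directed capacitated graph given by `cap`:
capacity constraints on every edge and conservation at every vertex other than `s`, `t`. -/
def IsFlow {V : Type*} [Fintype V] (cap : V → V → ℕ) (s t : V) (f : V → V → ℕ) : Prop :=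
  (∀ u v, f u v ≤ cap u v) ∧
  ∀ v, v ≠ s → v ≠ t → ∑ u, f u v = ∑ u, f v u

/-- The maximum `s`-`t` flow value: the supremum of net flow out of `s` over feasible flows. -/
noncomputable def maxFlow {V : Type*} [Fintype V] (cap : V → V → ℕ) (s t : V) : ℕ :=
  sSup {x : ℕ | ∃ f, IsFlow cap s t f ∧ ∑ v, f s v = x + ∑ v, f v s}


/-- A CNF clause over variables `U1 ⊕ U2 ⊕ U3`. -/
abbrev Clause3 (U1 U2 U3 : Type*) := Finset ((U1 ⊕ U2 ⊕ U3) × Bool)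

/-- The assignment `a` to `U1` satisfies the clause `C`. -/
def sat3A {U1 U2 U3 : Type*} (a : U1 → Bool) (C : Clause3 U1 U2 U3) : Prop :=
  ∃ l ∈ C, ∃ x : U1, l.1 = Sum.inl x ∧ a x = l.2

/-- The assignment `b` to `U2` satisfies the clause `C`. -/
def sat3B {U1 U2 U3 : Type*} (b : U2 → Bool) (C : Clause3 U1 U2 U3) : Prop :=
  ∃ l ∈ C, ∃ x : U2, l.1 = Sum.inr (Sum.inl x) ∧ b x = l.2

/-- The assignment `g` to `U3` satisfies the clause `C`. -/
def sat3G {U1 U2 U3 : Type*} (g : U3 → Bool) (C : Clause3 U1 U2 U3) : Prop :=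
  ∃ l ∈ C, ∃ x : U3, l.1 = Sum.inr (Sum.inr x) ∧ g x = l.2

/-- Internal vertices of one gadget copy (for one assignment `β` to `U2`). -/
inductive UInner (m p : ℕ) where
  | bl (i : Fin m)         -- β_i^l
  | br (i : Fin m)         -- β_i^r
  | bp                     -- β'
  | bpj (j : Fin (p - 1))  -- β'_j
  deriving DecidableEq, Fintype

/-- Vertices of the full uncapacitated reduction graph `G_p` (for fixed `α`, `γ`):
the source `α`, one copy of the gadget internals for each assignment `β : B`,
and the sink `γ`. Distinct copies share only the source and sink and there are
no edges between distinct copies. -/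
abbrev FullUV (B : Type*) (m p : ℕ) := Unit ⊕ (B × UInner m p) ⊕ Unit

/-- Unit-capacity edges of `G_p`: within each copy `β` the edges of `G_p^{α,β,γ}`. -/
noncomputable def fucap {B : Type*} {m p : ℕ} (sA : Fin m → Prop) (sB : B → Fin m → Prop)
    (sG : Fin m → Prop) : FullUV B m p → FullUV B m p → ℕ
  | Sum.inl _, Sum.inr (Sum.inl (b, .bl i)) => if ¬ sA i ∧ ¬ sB b i then 1 else 0
  | Sum.inl _, Sum.inr (Sum.inl (b, .br i)) => if sA i ∨ sB b i then 1 else 0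
  | Sum.inr (Sum.inl (b, .bl i)), Sum.inr (Sum.inr _) =>
      if ¬ sA i ∧ ¬ sB b i ∧ ¬ sG i then 1 else 0
  | Sum.inr (Sum.inl (b, .bl i)), Sum.inr (Sum.inl (b', .br j)) =>
      if b = b' ∧ i = j then 1 else 0
  | Sum.inr (Sum.inl (b, .br _)), Sum.inr (Sum.inl (b', .bp)) => if b = b' then 1 else 0
  | Sum.inr (Sum.inl (b, .bp)), Sum.inr (Sum.inl (b', .bpj _)) => if b = b' then 1 else 0
  | Sum.inr (Sum.inl (_, .bpj _)), Sum.inr (Sum.inr _) => 1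
  | _, _ => 0

/-!
The upper bound comes from cuts that keep every copy `β` whole. Putting a copy on the sink side cuts
the `m` edges from the source into it; putting it on the source side cuts one sink edge per
unsatisfied clause and the `p - 1` edges from the `β'_j` to the sink. If `k` clauses are satisfied,
the cheaper of the two costs `(m - k) + min k (p - 1)`. This is attained by sending one unit along
`α → β_i^l → γ` for every unsatisfied clause and one unit through `β'` for each of
`min k (p - 1)` satisfied clauses, so the maximum flow is the sum of these numbers. A summand
equals `m` if `k ≤ p - 1` and is smaller than `m` otherwise.
-/

section Cut

variable {V : Type*} [Fintype V] [DecidableEq V] {cap f : V → V → ℕ} {s t : V} {S : Finset V}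

/-- The capacity of the cut `(S, Sᶜ)`: the total capacity of the edges leaving `S`. It is the bound
on flows used in weak duality. -/
def cutCapacity (cap : V → V → ℕ) (S : Finset V) : ℕ :=
  ∑ u ∈ S, ∑ v ∈ Sᶜ, cap u v

lemma cutCapacity_mono {cap' : V → V → ℕ} (h : ∀ u v, cap u v ≤ cap' u v) (S : Finset V) :
    cutCapacity cap S ≤ cutCapacity cap' S :=
  Finset.sum_le_sum fun u _ => Finset.sum_le_sum fun v _ => h u v

lemma IsFlow.cutCapacity_eq_value_add {x : ℕ} (hf : IsFlow cap s t f)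
    (hx : ∑ v, f s v = x + ∑ v, f v s) (hs : s ∈ S) (ht : t ∉ S) :
    cutCapacity f S = x + ∑ u ∈ S, ∑ v ∈ Sᶜ, f v u := by
  have hconserve : ∑ u ∈ S.erase s, ∑ v, f u v = ∑ u ∈ S.erase s, ∑ v, f v u :=
    Finset.sum_congr rfl fun u hu =>
      (hf.2 u (Finset.ne_of_mem_erase hu)
        (ne_of_mem_of_not_mem (Finset.mem_of_mem_erase hu) ht)).symm
  have htotal : ∑ u ∈ S, ∑ v, f u v = x + ∑ u ∈ S, ∑ v, f v u := by
    rw [← Finset.add_sum_erase S _ hs, ← Finset.add_sum_erase S _ hs, hconserve, hx, add_assoc]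
  have hinternal : ∑ u ∈ S, ∑ v ∈ S, f u v = ∑ u ∈ S, ∑ v ∈ S, f v u := Finset.sum_comm
  simp only [← Finset.sum_add_sum_compl S, Finset.sum_add_distrib] at htotal
  rw [cutCapacity]
  omega

lemma IsFlow.value_le_cutCapacity {x : ℕ} (hf : IsFlow cap s t f)
    (hx : ∑ v, f s v = x + ∑ v, f v s) (hs : s ∈ S) (ht : t ∉ S) :
    x ≤ cutCapacity cap S :=
  calc x ≤ cutCapacity f S :=
        (hf.cutCapacity_eq_value_add hx hs ht).symm ▸ Nat.le_add_right ..
    _ ≤ cutCapacity cap S := cutCapacity_mono hf.1 S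

lemma IsFlow.maxFlow_eq_cutCapacity (hf : IsFlow cap s t f) (hs : s ∈ S) (ht : t ∉ S)
    (hx : ∑ v, f s v = cutCapacity cap S + ∑ v, f v s) :
    maxFlow cap s t = cutCapacity cap S :=
  IsGreatest.csSup_eq ⟨⟨f, hf, hx⟩, fun _ ⟨_, hf', hx'⟩ => hf'.value_le_cutCapacity hx' hs ht⟩

end Cut

section Vertices

variable {M : Type*} [AddCommMonoid M] {B : Type*} {m p : ℕ}

lemma UInner.sum_univ (F : UInner m p → M) :
    ∑ w, F w = ∑ i, F (.bl i) + ∑ i, F (.br i) + F .bp + ∑ j, F (.bpj j) := by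
  let e : ((Fin m ⊕ Fin m) ⊕ Unit) ⊕ Fin (p - 1) ≃ UInner m p :=
    { toFun := Sum.elim (Sum.elim (Sum.elim .bl .br) fun _ => .bp) .bpj
      invFun := fun
        | .bl i => .inl (.inl (.inl i))
        | .br i => .inl (.inl (.inr i))
        | .bp => .inl (.inr ())
        | .bpj j => .inr j
      left_inv := by rintro (((i | i) | _) | j) <;> rfl
      right_inv := by rintro (i | i | _ | j) <;> rfl }
  rw [← e.sum_comp F]
  simp [e]

lemma FullUV.sum_univ [Fintype B] (F : FullUV B m p → M) :
    ∑ v, F v = F (.inl ()) + ∑ b, ∑ w, F (.inr (.inl (b, w))) + F (.inr (.inr ())) := by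
  simp [Fintype.sum_sum_type, Fintype.sum_prod_type, add_assoc]

end Vertices

section Reduction

variable {B : Type*} {m p : ℕ} (sA : Fin m → Prop) (sB : B → Fin m → Prop) (sG : Fin m → Prop)

/-- The set of clauses satisfied in copy `b`; its size determines the contribution of the copy to
the maximum flow. -/
noncomputable def satisfied (b : B) : Finset (Fin m) :=
  Finset.univ.filter fun i => sA i ∨ sB b i ∨ sG i

variable {sA sB sG} in
lemma mem_satisfied {b : B} {i : Fin m} :
    i ∈ satisfied sA sB sG b ↔ sA i ∨ sB b i ∨ sG i := by
  simp [satisfied]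

lemma sum_fucap_source (b : B) :
    ∑ w, fucap (p := p) sA sB sG (.inl ()) (.inr (.inl (b, w))) = m := by
  have hclause (i : Fin m) :
      ((if ¬sA i ∧ ¬sB b i then 1 else 0) + if sA i ∨ sB b i then 1 else 0) = 1 := by
    simp only [← not_or]
    split_ifs <;> simp_all
  simp only [UInner.sum_univ, fucap, Finset.sum_const_zero, add_zero, ← Finset.sum_add_distrib,
    hclause, Finset.sum_const, Finset.card_univ, Fintype.card_fin, smul_eq_mul, mul_one]

lemma sum_fucap_sink (b : B) :
    ∑ w, fucap (p := p) sA sB sG (.inr (.inl (b, w))) (.inr (.inr ())) =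
      (satisfied sA sB sG b)ᶜ.card + (p - 1) := by
  have hcompl : (satisfied sA sB sG b)ᶜ =
      Finset.univ.filter fun i => ¬sA i ∧ ¬sB b i ∧ ¬sG i := by
    ext i
    simp [mem_satisfied]
  simp [UInner.sum_univ, fucap, hcompl]

lemma fucap_eq_zero_of_ne {b b' : B} (h : b ≠ b') (w w' : UInner m p) :
    fucap sA sB sG (.inr (.inl (b, w))) (.inr (.inl (b', w'))) = 0 := by
  rcases w with i | i | _ | j <;> rcases w' with _ | i' | _ | j' <;> simp [fucap, h]

/-- The source side of a cut of `G_p` that never splits a copy: the source and the copies in `C`. -/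
def sourceSide (m p : ℕ) (C : Finset B) : Finset (FullUV B m p) :=
  Finset.univ.disjSum ((C ×ˢ Finset.univ).disjSum ∅)

lemma compl_sourceSide [Fintype B] [DecidableEq B] (C : Finset B) :
    (sourceSide m p C)ᶜ = Finset.disjSum ∅ ((Cᶜ ×ˢ Finset.univ).disjSum Finset.univ) := by
  ext (_ | ⟨b, w⟩ | _) <;> simp [sourceSide]

lemma cutCapacity_sourceSide [Fintype B] [DecidableEq B] (C : Finset B) :
    cutCapacity (fucap (p := p) sA sB sG) (sourceSide m p C) =
      ∑ b ∈ C, ((satisfied sA sB sG b)ᶜ.card + (p - 1)) + ∑ _b ∈ Cᶜ, m := by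
  have hcross : ∀ b ∈ C, ∑ w, ∑ b' ∈ Cᶜ, ∑ w',
      fucap (p := p) sA sB sG (.inr (.inl (b, w))) (.inr (.inl (b', w'))) = 0 := fun b hb =>
    Finset.sum_eq_zero fun w _ => Finset.sum_eq_zero fun b' hb' => Finset.sum_eq_zero fun w' _ =>
      fucap_eq_zero_of_ne sA sB sG (ne_of_mem_of_not_mem hb (Finset.mem_compl.1 hb')) w w'
  have hdirect : fucap (p := p) sA sB sG (.inl ()) (.inr (.inr ())) = 0 := rfl
  rw [cutCapacity, compl_sourceSide, sourceSide]
  simp only [Finset.sum_disjSum, Finset.sum_product, Finset.univ_unique, Finset.sum_singleton,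
    Finset.sum_empty, Finset.sum_add_distrib, PUnit.default_eq_unit, sum_fucap_source,
    Finset.sum_congr rfl hcross, sum_fucap_sink, hdirect]
  simp [add_comm]

/-- The indicator function of the vertices of `G_p` used when, in each copy `b`, the clauses in
`R b` are routed through `β'` and the unsatisfied clauses directly to the sink. The units of flow
leaving `β'` use the first `(R b).card` of the vertices `β'_j`. -/
noncomputable def routed (R : B → Finset (Fin m)) : FullUV B m p → ℕ
  | .inr (.inl (b, .bl i)) => if ¬sA i ∧ ¬sB b i ∧ (i ∈ R b ∨ ¬sG i) then 1 else 0
  | .inr (.inl (b, .br i)) => if i ∈ R b then 1 else 0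
  | .inr (.inl (b, .bpj j)) => if j < (R b).card then 1 else 0
  | _ => 1

/-- The flow in `G_p` that saturates exactly the edges between `routed` vertices. -/
noncomputable def routeFlow (R : B → Finset (Fin m)) (u v : FullUV B m p) : ℕ :=
  routed sA sB sG R u * routed sA sB sG R v * fucap sA sB sG u v

lemma routed_le_one (R : B → Finset (Fin m)) (v : FullUV B m p) : routed sA sB sG R v ≤ 1 := by
  rcases v with _ | ⟨b, (i | i | _ | j)⟩ | _ <;> simp only [routed, le_refl] <;> split_ifs <;> simp

lemma routeFlow_le_fucap (R : B → Finset (Fin m)) (u v : FullUV B m p) :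
    routeFlow sA sB sG R u v ≤ fucap sA sB sG u v :=
  mul_le_of_le_one_left' <|
    Nat.mul_le_mul (routed_le_one sA sB sG R u) (routed_le_one sA sB sG R v)

variable {sA sB sG} {R : B → Finset (Fin m)}

lemma sum_routeFlow_source {b : B} (hsat : R b ⊆ satisfied sA sB sG b) :
    ∑ w, routeFlow (p := p) sA sB sG R (.inl ()) (.inr (.inl (b, w))) =
      (satisfied sA sB sG b)ᶜ.card + (R b).card := by
  have hclause (i : Fin m) :
      ((if ¬sA i ∧ ¬sB b i then if ¬sA i ∧ ¬sB b i ∧ (i ∈ R b ∨ ¬sG i) then 1 else 0 else 0) +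
        if sA i ∨ sB b i then if i ∈ R b then 1 else 0 else 0) =
      (if i ∈ (satisfied sA sB sG b)ᶜ then 1 else 0) + if i ∈ R b then 1 else 0 := by
    have hi : i ∈ R b → sA i ∨ sB b i ∨ sG i := fun hi => mem_satisfied.1 (hsat hi)
    simp only [Finset.mem_compl, mem_satisfied]
    split_ifs <;> simp_all
  simp only [UInner.sum_univ, routeFlow, routed, fucap, mul_ite, mul_one, one_mul, mul_zero,
    Finset.sum_const_zero, add_zero]
  rw [← Finset.sum_add_distrib, Finset.sum_congr rfl fun i _ => hclause i]
  simp only [Finset.sum_add_distrib, Finset.sum_ite_mem, Finset.univ_inter,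
    ← Finset.card_eq_sum_ones]

section FlowSums

variable [Fintype B] {f : FullUV B m p → FullUV B m p → ℕ}

lemma sum_in_source_of_le_fucap (hf : ∀ u v, f u v ≤ fucap sA sB sG u v) :
    ∑ v, f v (.inl ()) = 0 := by
  refine Finset.sum_eq_zero fun v _ => Nat.le_zero.1 ((hf _ _).trans_eq ?_)
  rcases v with _ | ⟨b, (i | i | _ | j)⟩ | _ <;> rfl

lemma sum_out_source_of_le_fucap (hf : ∀ u v, f u v ≤ fucap sA sB sG u v) :
    ∑ v, f (.inl ()) v = ∑ b, ∑ w, f (.inl ()) (.inr (.inl (b, w))) := by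
  have hloop : f (.inl ()) (.inl ()) = 0 := Nat.le_zero.1 (hf _ _)
  have hdirect : f (.inl ()) (.inr (.inr ())) = 0 := Nat.le_zero.1 (hf _ _)
  rw [FullUV.sum_univ, hloop, hdirect, zero_add, add_zero]

lemma sum_in_copy_of_le_fucap (hf : ∀ u v, f u v ≤ fucap sA sB sG u v) (b : B) (w : UInner m p) :
    ∑ v, f v (.inr (.inl (b, w))) =
      f (.inl ()) (.inr (.inl (b, w))) +
        ∑ w', f (.inr (.inl (b, w'))) (.inr (.inl (b, w))) := by
  have hsink : f (.inr (.inr ())) (.inr (.inl (b, w))) = 0 :=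
    Nat.le_zero.1 ((hf _ _).trans_eq (by rcases w with _ | _ | _ | _ <;> rfl))
  rw [FullUV.sum_univ, hsink, add_zero, Fintype.sum_eq_single b fun b' hb' =>
    Finset.sum_eq_zero fun w' _ =>
      Nat.le_zero.1 ((hf _ _).trans_eq (fucap_eq_zero_of_ne sA sB sG hb' w' w))]

lemma sum_out_copy_of_le_fucap (hf : ∀ u v, f u v ≤ fucap sA sB sG u v) (b : B) (w : UInner m p) :
    ∑ v, f (.inr (.inl (b, w))) v =
      ∑ w', f (.inr (.inl (b, w))) (.inr (.inl (b, w'))) +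
        f (.inr (.inl (b, w))) (.inr (.inr ())) := by
  have hsource : f (.inr (.inl (b, w))) (.inl ()) = 0 :=
    Nat.le_zero.1 ((hf _ _).trans_eq (by rcases w with _ | _ | _ | _ <;> rfl))
  rw [FullUV.sum_univ, hsource, zero_add, Fintype.sum_eq_single b fun b' hb' =>
    Finset.sum_eq_zero fun w' _ =>
      Nat.le_zero.1 ((hf _ _).trans_eq (fucap_eq_zero_of_ne sA sB sG hb'.symm w w'))]

end FlowSums

variable [Fintype B]

lemma isFlow_routeFlow (hsat : ∀ b, R b ⊆ satisfied sA sB sG b)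
    (hcard : ∀ b, (R b).card ≤ p - 1) :
    IsFlow (fucap (p := p) sA sB sG) (.inl ()) (.inr (.inr ())) (routeFlow sA sB sG R) := by
  have hle := routeFlow_le_fucap (p := p) sA sB sG R
  refine ⟨hle, ?_⟩
  rintro (_ | ⟨b, w⟩ | _) hs ht
  · exact absurd rfl hs
  · rw [sum_in_copy_of_le_fucap hle, sum_out_copy_of_le_fucap hle]
    have hR (i : Fin m) (hi : i ∈ R b) : sA i ∨ sB b i ∨ sG i := mem_satisfied.1 (hsat b hi)
    rcases w with i | i | _ | j
    · simp only [UInner.sum_univ, routeFlow, routed, fucap, mul_ite, ite_mul, mul_one, one_mul,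
        mul_zero, zero_mul, true_and, Finset.sum_ite_irrel, Finset.sum_ite_eq, Finset.mem_univ,
        ↓reduceIte, Finset.sum_const_zero, add_zero, zero_add]
      specialize hR i
      split_ifs <;> simp_all
    · simp only [UInner.sum_univ, routeFlow, routed, fucap, mul_ite, ite_mul, mul_one, one_mul,
        mul_zero, zero_mul, true_and, Finset.sum_ite_irrel, Finset.sum_ite_eq', Finset.mem_univ,
        ↓reduceIte, Finset.sum_const_zero, add_zero, zero_add]
      split_ifs <;> simp_all
    · simp [UInner.sum_univ, routeFlow, routed, fucap, Fin.card_filter_val_lt, hcard b]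
    · simp [UInner.sum_univ, routeFlow, routed, fucap]
  · exact absurd rfl ht

variable (sA sB sG) in
theorem maxFlow_fucap :
    maxFlow (fucap (p := p) sA sB sG) (.inl ()) (.inr (.inr ())) =
      ∑ b, ((satisfied sA sB sG b)ᶜ.card + min (satisfied sA sB sG b).card (p - 1)) := by
  choose R hsat hcard using fun b =>
    Finset.exists_subset_card_eq (min_le_left (satisfied sA sB sG b).card (p - 1))
  let C : Finset B := Finset.univ.filter fun b => p - 1 < (satisfied sA sB sG b).card
  have hcut : cutCapacity (fucap (p := p) sA sB sG) (sourceSide m p C) =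
      ∑ b, ((satisfied sA sB sG b)ᶜ.card + min (satisfied sA sB sG b).card (p - 1)) := by
    rw [cutCapacity_sourceSide, ← Finset.sum_add_sum_compl C]
    congr 1 <;> refine Finset.sum_congr rfl fun b hb => ?_
    · rw [min_eq_right (Finset.mem_filter.1 hb).2.le]
    · have hle : (satisfied sA sB sG b).card ≤ p - 1 := by simpa [C] using hb
      rw [min_eq_left hle, Finset.card_compl_add_card, Fintype.card_fin]
  rw [← hcut]
  have hflow : IsFlow (fucap (p := p) sA sB sG) (.inl ()) (.inr (.inr ()))
      (routeFlow sA sB sG R) :=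
    isFlow_routeFlow hsat fun b => (hcard b).trans_le (min_le_right ..)
  refine hflow.maxFlow_eq_cutCapacity (by simp [sourceSide]) (by simp [sourceSide]) ?_
  rw [sum_in_source_of_le_fucap hflow.1, sum_out_source_of_le_fucap hflow.1, hcut, add_zero]
  simp only [sum_routeFlow_source (hsat _), hcard]

end Reduction

theorem stmt10_general {B : Type*} [Fintype B] {m p : ℕ} (hp1 : 1 ≤ p)
    (sA : Fin m → Prop) (sB : B → Fin m → Prop) (sG : Fin m → Prop) :
    ((∃ b, p ≤ (satisfied sA sB sG b).card) →
      maxFlow (fucap (p := p) sA sB sG) (.inl ()) (.inr (.inr ())) ≤ Fintype.card B * m - 1)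
    ∧ ((∀ b, (satisfied sA sB sG b).card ≤ p - 1) →
      Fintype.card B * m ≤ maxFlow (fucap (p := p) sA sB sG) (.inl ()) (.inr (.inr ()))) := by
  have hm (b : B) : (satisfied sA sB sG b)ᶜ.card + (satisfied sA sB sG b).card = m := by
    rw [Finset.card_compl_add_card, Fintype.card_fin]
  have hsum : Fintype.card B * m = ∑ _b : B, m := by simp
  rw [maxFlow_fucap, hsum]
  refine ⟨fun ⟨b, hb⟩ => Nat.le_sub_one_of_lt ?_, fun h => ?_⟩
  · refine Finset.sum_lt_sum (fun c _ => ?_) ⟨b, Finset.mem_univ b, ?_⟩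
    · exact (Nat.add_le_add_left (min_le_left ..) _).trans_eq (hm c)
    · have hmb := hm b
      omega
  · refine Finset.sum_le_sum fun b _ => ?_
    rw [min_eq_left (h b), hm]

/-- in the full graph `G_p` (union over all `2^{|U2|}` assignments `β` of
the gadgets, disjoint except at the source `α` and sink `γ`), the max `α`-`γ` flow is at
most `2^{|U2|}·m − 1` if some `β` makes `(α, β, γ)` satisfy at least `p` clauses, and at
least `2^{|U2|}·m` if every `β` makes `(α, β, γ)` satisfy at most `p − 1` clauses. -/
theorem stmt10 {U1 U2 U3 : Type*} [Fintype U2] [DecidableEq U2] {m p : ℕ}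
    (hp1 : 1 ≤ p) (hpm : p ≤ m) (F : Fin m → Clause3 U1 U2 U3)
    (a : U1 → Bool) (g : U3 → Bool) :
    ((∃ b : U2 → Bool, p ≤ (Finset.univ.filter fun i =>
        sat3A a (F i) ∨ sat3B b (F i) ∨ sat3G g (F i)).card) →
      maxFlow (fucap (B := U2 → Bool) (m := m) (p := p)
          (fun i => sat3A a (F i)) (fun b i => sat3B b (F i)) (fun i => sat3G g (F i)))
        (Sum.inl ()) (Sum.inr (Sum.inr ())) ≤ 2 ^ Fintype.card U2 * m - 1)
    ∧ ((∀ b : U2 → Bool, (Finset.univ.filter fun i =>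
        sat3A a (F i) ∨ sat3B b (F i) ∨ sat3G g (F i)).card ≤ p - 1) →
      2 ^ Fintype.card U2 * m ≤
        maxFlow (fucap (B := U2 → Bool) (m := m) (p := p)
          (fun i => sat3A a (F i)) (fun b i => sat3B b (F i)) (fun i => sat3G g (F i)))
        (Sum.inl ()) (Sum.inr (Sum.inr ()))) := by
  rw [← Fintype.card_bool, ← Fintype.card_fun]
  exact stmt10_general hp1 _ _ _
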